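/- Let k ≥ 3 and let n_1, …, n_k be positive integers such that n_1 is odd and n_i is even for every i with 2 ≤ i ≤ k. If n_1 = 3 or n_i = 2 for some i with 2 ≤ i ≤ k, then the signed domination number of the complete k-partite graph K_{n_1,…,n_k} equals 3. -/

import Mathlib

open scoped Classical

/-- The signed domination number of a finite simple graph `G`: the minimum weight of a
function `f : V → {−1, 1}` such that `f(N[v]) ≥ 1` for every vertex `v`. -/
noncomputable def signedDomNum {V : Type*} [Fintype V] (G : SimpleGraph V) : ℤ :=
  sInf {w : ℤ | ∃ f : V → ℤ, (∀ v, f v = 1 ∨ f v = -1) ∧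
    (∀ v, 1 ≤ f v + ∑ u ∈ G.neighborFinset v, f u) ∧ w = ∑ v, f v}

/-!
Write `s` for the weight of a signed dominating function of a complete multipartite graph and `sᵢ`
for its weight on the `i`-th part, so that `f(N[v]) = f(v) + s - sᵢ` for `v` in that part. Only the
smallest value of `f` on the part matters, so domination says that each nonempty part either has
`sᵢ ≤ s - 2` or is constantly `1` with `sᵢ ≤ s`.

If exactly one part `o` is odd, then `s` is odd. Suppose `s ≤ 1`. No nonempty even part can be
constantly `1`, so each of them contributes negatively and `s ≤ sₒ`. This excludes `sₒ ≤ s - 2`, so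
`o` is constantly `1` with `|Vₒ| = sₒ ≤ s ≤ 1`: it is a single vertex, any other vertex lies in a
nonempty even part, and `s < sₒ`, a contradiction. Hence `s ≥ 3`. The value `3` is attained by
putting weight `3` on an odd part of size `3`, or weight `1` on the odd part and `2` on an even part
of size `2`, and weight `0` on all other parts.
-/

section SignFunctions

variable {α : Type*} [Fintype α] {g : α → ℤ}

lemma even_sum_iff_even_card_of_sign (hg : ∀ x, g x = 1 ∨ g x = -1) :
    Even (∑ x, g x) ↔ Even (Fintype.card α) := by
  have hdiff : Even (∑ x, (g x - 1)) := Finset.even_sum _ fun x _ => by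
    rcases hg x with h | h <;> rw [h] <;> decide
  simpa [Int.even_sub] using hdiff

lemma sum_eq_card_iff_of_sign (hg : ∀ x, g x = 1 ∨ g x = -1) :
    ∑ x, g x = Fintype.card α ↔ ∀ x, g x = 1 := by
  have hle : ∀ x ∈ Finset.univ, g x ≤ 1 := fun x _ => by
    rcases hg x with h | h <;> omega
  simpa using Finset.sum_eq_sum_iff_of_le hle

lemma exists_sign_sum_eq {c : ℤ} (hc : |c| ≤ Fintype.card α)
    (heven : Even c ↔ Even (Fintype.card α)) :
    ∃ g : α → ℤ, (∀ x, g x = 1 ∨ g x = -1) ∧ ∑ x, g x = c := by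
  obtain ⟨hlow, hup⟩ := abs_le.1 hc
  obtain ⟨p, hp⟩ : Even (c + Fintype.card α) := Int.even_add.2 (by simpa using heven)
  obtain ⟨t, -, ht⟩ := Finset.exists_subset_card_eq
    (show p.toNat ≤ (Finset.univ : Finset α).card by rw [Finset.card_univ]; omega)
  refine ⟨fun x => 2 * (if x ∈ t then 1 else 0) - 1, fun x => ?_, ?_⟩
  · by_cases hx : x ∈ t <;> simp [hx]
  · rw [Finset.sum_sub_distrib, ← Finset.mul_sum, Finset.sum_boole, Finset.filter_univ_mem, ht]
    simp only [Finset.sum_const, Finset.card_univ, nsmul_one]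
    omega

end SignFunctions

section SignedDominating

variable {W : Type*} [Fintype W] {G : SimpleGraph W}

/-- `f` is a signed dominating function of `G`: a `±1`-valued function of weight at least `1` on
every closed neighborhood. It is `ℤ`-valued so that weights are plain sums. -/
def IsSignedDominating (G : SimpleGraph W) (f : W → ℤ) : Prop :=
  (∀ v, f v = 1 ∨ f v = -1) ∧ ∀ v, 1 ≤ f v + ∑ u ∈ G.neighborFinset v, f u

lemma IsSignedDominating.signedDomNum_eq_sum {f : W → ℤ} (hf : IsSignedDominating G f)
    (hmin : ∀ g, IsSignedDominating G g → ∑ v, f v ≤ ∑ v, g v) :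
    signedDomNum G = ∑ v, f v := by
  refine IsLeast.csInf_eq ⟨⟨f, hf.1, hf.2, rfl⟩, ?_⟩
  rintro _ ⟨g, hsign, hdom, rfl⟩
  exact hmin g ⟨hsign, hdom⟩

end SignedDominating

section CompleteMultipartite

variable {ι : Type*} {V : ι → Type*} [Fintype ι] [∀ i, Fintype (V i)]

lemma sum_neighborFinset_completeMultipartiteGraph {M : Type*} [AddCommGroup M]
    (f : (Σ i, V i) → M) (v : Σ i, V i)
    [Fintype ((SimpleGraph.completeMultipartiteGraph V).neighborSet v)] :
    ∑ u ∈ (SimpleGraph.completeMultipartiteGraph V).neighborFinset v, f u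
      = ∑ u, f u - ∑ x, f ⟨v.1, x⟩ := by
  have hneighbor : (SimpleGraph.completeMultipartiteGraph V).neighborFinset v
      = Finset.univ.filter fun u : Σ i, V i => ¬u.1 = v.1 := by
    ext u
    simp [eq_comm]
  have hpart : ∑ u : Σ i, V i with u.1 = v.1, f u = ∑ x, f ⟨v.1, x⟩ := by
    rw [Finset.sum_filter, Fintype.sum_sigma, Fintype.sum_eq_single v.1]
    · simp
    · intro i hi
      simp [hi]
  rw [hneighbor, ← hpart, eq_sub_iff_add_eq']
  exact Finset.sum_filter_add_sum_filter_not _ _ _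

lemma isSignedDominating_completeMultipartiteGraph_iff {f : (Σ i, V i) → ℤ} :
    IsSignedDominating (SimpleGraph.completeMultipartiteGraph V) f ↔
      (∀ v, f v = 1 ∨ f v = -1) ∧ ∀ i, Nonempty (V i) →
        ∑ x, f ⟨i, x⟩ + 2 ≤ ∑ v, f v ∨
          (∑ x, f ⟨i, x⟩ = Fintype.card (V i) ∧ ∑ x, f ⟨i, x⟩ ≤ ∑ v, f v) := by
  simp only [IsSignedDominating, sum_neighborFinset_completeMultipartiteGraph, Sigma.forall]
  refine and_congr_right fun hsign => forall_congr' fun i => ⟨fun hdom ⟨x⟩ => ?_, fun hpart x => ?_⟩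
  · by_cases hone : ∀ y, f ⟨i, y⟩ = 1
    · have hx := hdom x
      rw [hone x] at hx
      exact Or.inr ⟨(sum_eq_card_iff_of_sign (hsign i)).2 hone, by omega⟩
    · push Not at hone
      obtain ⟨y, hy⟩ := hone
      have hy_dom := hdom y
      rw [(hsign i y).resolve_left hy] at hy_dom
      exact Or.inl (by omega)
  · rcases hpart ⟨x⟩ with hlt | ⟨hcard, hle⟩
    · rcases hsign i x with h | h <;> omega
    · have hx := (sum_eq_card_iff_of_sign (hsign i)).1 hcard x
      omega

lemma exists_isSignedDominating_completeMultipartiteGraph_of_part_sums {c : ι → ℤ} {s : ℤ}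
    (hs : ∑ i, c i = s) (hc : ∀ i, |c i| ≤ Fintype.card (V i))
    (heven : ∀ i, Even (c i) ↔ Even (Fintype.card (V i)))
    (hdom : ∀ i, c i + 2 ≤ s ∨ (c i = Fintype.card (V i) ∧ c i ≤ s)) :
    ∃ f, IsSignedDominating (SimpleGraph.completeMultipartiteGraph V) f ∧ ∑ v, f v = s := by
  choose g hsign hsum using fun i => exists_sign_sum_eq (hc i) (heven i)
  have htotal : ∑ v : Σ i, V i, g v.1 v.2 = s := by
    simp only [Fintype.sum_sigma, hsum, hs]
  refine ⟨fun v => g v.1 v.2, ?_, htotal⟩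
  rw [isSignedDominating_completeMultipartiteGraph_iff]
  refine ⟨fun v => hsign v.1 v.2, fun i _ => ?_⟩
  simpa only [htotal, hsum] using hdom i

variable {o : ι}

lemma odd_sum_of_sign_of_odd_card {f : (Σ i, V i) → ℤ} (hsign : ∀ v, f v = 1 ∨ f v = -1)
    (ho : Odd (Fintype.card (V o))) (he : ∀ i, i ≠ o → Even (Fintype.card (V i))) :
    Odd (∑ v, f v) := by
  rw [← Int.not_even_iff_odd, even_sum_iff_even_card_of_sign hsign, Nat.not_even_iff_odd,
    Fintype.card_sigma, Fintype.sum_eq_add_sum_compl o]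
  exact ho.add_even (Finset.even_sum _ fun i hi => he i (by simpa using hi))

lemma IsSignedDominating.three_le_sum_of_odd_part [Nontrivial (Σ i, V i)] {f : (Σ i, V i) → ℤ}
    (hf : IsSignedDominating (SimpleGraph.completeMultipartiteGraph V) f)
    (ho : Odd (Fintype.card (V o))) (he : ∀ i, i ≠ o → Even (Fintype.card (V i))) :
    3 ≤ ∑ v, f v := by
  obtain ⟨hsign, hpart⟩ := isSignedDominating_completeMultipartiteGraph_iff.1 hf
  by_contra! hlt
  have hle_one : ∑ v, f v ≤ 1 := by
    obtain ⟨t, ht⟩ := odd_sum_of_sign_of_odd_card hsign ho he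
    omega
  have hneg (i : ι) (hi : i ≠ o) (hne : Nonempty (V i)) : ∑ x, f ⟨i, x⟩ < 0 := by
    obtain ⟨t, ht⟩ := he i hi
    have hpos : 0 < Fintype.card (V i) := Fintype.card_pos
    rcases hpart i hne with h | h <;> omega
  have hnonpos : ∀ i ∈ ({o}ᶜ : Finset ι), ∑ x, f ⟨i, x⟩ ≤ 0 := fun i hi => by
    rcases isEmpty_or_nonempty (V i) with hemp | hne
    · simp
    · exact (hneg i (by simpa using hi) hne).le
  have hsplit : ∑ v, f v = ∑ x, f ⟨o, x⟩ + ∑ i ∈ {o}ᶜ, ∑ x, f ⟨i, x⟩ := by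
    rw [Fintype.sum_sigma, Fintype.sum_eq_add_sum_compl o]
  obtain ⟨x⟩ : Nonempty (V o) := Fintype.card_pos_iff.1 ho.pos
  rcases hpart o ⟨x⟩ with ho_lt | ⟨ho_card, ho_le⟩
  · have hrest := Finset.sum_nonpos hnonpos
    omega
  · have : Subsingleton (V o) := Fintype.card_le_one_iff_subsingleton.1 (by omega)
    obtain ⟨⟨i, y⟩, hy⟩ := exists_ne (⟨o, x⟩ : Σ i, V i)
    have hi : i ≠ o := by
      rintro rfl
      exact hy (congrArg _ (Subsingleton.elim y x))
    have hrest := Finset.sum_neg' hnonpos ⟨i, by simpa using hi, hneg i hi ⟨y⟩⟩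
    omega

lemma exists_isSignedDominating_sum_eq_three_of_card_eq_three (ho : Fintype.card (V o) = 3)
    (he : ∀ i, i ≠ o → Even (Fintype.card (V i))) :
    ∃ f, IsSignedDominating (SimpleGraph.completeMultipartiteGraph V) f ∧ ∑ v, f v = 3 := by
  refine exists_isSignedDominating_completeMultipartiteGraph_of_part_sums (c := Pi.single o 3)
    (by simp) (fun i => ?_) (fun i => ?_) (fun i => ?_)
  · obtain rfl | hi := eq_or_ne i o
    · simp [ho]
    · simp [hi]
  · obtain rfl | hi := eq_or_ne i o
    · rw [ho, Pi.single_eq_same]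
      decide
    · simp [hi, he i hi]
  · obtain rfl | hi := eq_or_ne i o
    · simp [ho]
    · simp [hi]

lemma exists_isSignedDominating_sum_eq_three_of_card_eq_two (ho : Odd (Fintype.card (V o)))
    (he : ∀ i, i ≠ o → Even (Fintype.card (V i))) {a : ι} (hao : a ≠ o)
    (ha : Fintype.card (V a) = 2) :
    ∃ f, IsSignedDominating (SimpleGraph.completeMultipartiteGraph V) f ∧ ∑ v, f v = 3 := by
  refine exists_isSignedDominating_completeMultipartiteGraph_of_part_sums
    (c := Pi.single o 1 + Pi.single a 2) (by simp [Finset.sum_add_distrib])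
    (fun i => ?_) (fun i => ?_) (fun i => ?_)
  · obtain rfl | hio := eq_or_ne i o
    · simpa [hao.symm, Nat.one_le_iff_ne_zero] using ho.pos.ne'
    · obtain rfl | hia := eq_or_ne i a <;> simp [*]
  · obtain rfl | hio := eq_or_ne i o
    · simpa [hao.symm] using ho
    · obtain rfl | hia := eq_or_ne i a <;> simp [*]
  · obtain rfl | hio := eq_or_ne i o
    · simp [hao.symm]
    · obtain rfl | hia := eq_or_ne i a <;> simp [*]

theorem signedDomNum_eq_three_multipartite_general
    (ho : Odd (Fintype.card (V o))) (he : ∀ i, i ≠ o → Even (Fintype.card (V i)))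
    (h : Fintype.card (V o) = 3 ∨ ∃ i, i ≠ o ∧ Fintype.card (V i) = 2) :
    signedDomNum (SimpleGraph.completeMultipartiteGraph V) = 3 := by
  have hnontrivial (i : ι) (hi : 1 < Fintype.card (V i)) : Nontrivial (Σ i, V i) :=
    have : Nontrivial (V i) := Fintype.one_lt_card_iff_nontrivial.1 hi
    (sigma_mk_injective (i := i)).nontrivial
  obtain ⟨hV, f, hf, hsum⟩ : Nontrivial (Σ i, V i) ∧
      ∃ f, IsSignedDominating (SimpleGraph.completeMultipartiteGraph V) f ∧ ∑ v, f v = 3 := by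
    rcases h with h | ⟨a, hao, ha⟩
    · exact ⟨hnontrivial o (by omega),
        exists_isSignedDominating_sum_eq_three_of_card_eq_three h he⟩
    · exact ⟨hnontrivial a (by omega),
        exists_isSignedDominating_sum_eq_three_of_card_eq_two ho he hao ha⟩
  rw [hf.signedDomNum_eq_sum fun g hg => hsum.trans_le (hg.three_le_sum_of_odd_part ho he), hsum]

end CompleteMultipartite

theorem signedDomNum_eq_three_multipartite
    (k : ℕ) (hk : 3 ≤ k) (n : Fin k → ℕ) (hn : ∀ i, 0 < n i)
    (h₁ : Odd (n ⟨0, by omega⟩))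
    (h₂ : ∀ i : Fin k, i ≠ ⟨0, by omega⟩ → Even (n i))
    (h : n ⟨0, by omega⟩ = 3 ∨ ∃ i : Fin k, i ≠ ⟨0, by omega⟩ ∧ n i = 2) :
    signedDomNum (SimpleGraph.completeMultipartiteGraph fun i : Fin k => Fin (n i)) = 3 :=
  signedDomNum_eq_three_multipartite_general (by simpa only [Fintype.card_fin] using h₁)
    (by simpa only [Fintype.card_fin] using h₂) (by simpa only [Fintype.card_fin] using h)
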